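/- Let d > 6, let G be a connected d-regular graph such that G² is not complete, let R be a C region of G, and let v ∈ R satisfy deg₂(v) = 2 and N₂'(v) = {u}. Then R contains at least two vertices adjacent to u. -/

import Mathlib

open SimpleGraph

variable {V : Type*}

/-- The set of vertices at distance exactly `i` from `v`. -/
def distSet (G : SimpleGraph V) (v : V) (i : ℕ) : Set V := {u | G.dist v u = i}

/-- `deg₂ v` : the number of vertices at distance exactly 2 from `v`. -/
noncomputable def deg2 (G : SimpleGraph V) (v : V) : ℕ := (distSet G v 2).ncard

/-- `N₂'(v)` : vertices at distance 2 from `v` that are adjacent to a vertex at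
distance 3 from `v`. -/
def N2' (G : SimpleGraph V) (v : V) : Set V :=
  {u | G.dist v u = 2 ∧ ∃ w, G.dist v w = 3 ∧ G.Adj u w}

/-- The square of `G` : an edge between `u` and `v` whenever `1 ≤ d(u,v) ≤ 2`. -/
def graphSquare (G : SimpleGraph V) : SimpleGraph V where
  Adj u v := 1 ≤ G.dist u v ∧ G.dist u v ≤ 2
  symm := by
    constructor
    intro u v h
    rwa [SimpleGraph.dist_comm]
  loopless := by
    constructor
    intro v h
    simp [SimpleGraph.dist_self] at h

/-- `G` is `d`-regular : every vertex has exactly `d` neighbors. -/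
def IsRegularGraph (G : SimpleGraph V) (d : ℕ) : Prop :=
  ∀ v, (G.neighborSet v).ncard = d

/-- The vertex set of the connected component of `G - u` containing `v` :
all vertices reachable from `v` by a walk avoiding `u`. -/
def compDel (G : SimpleGraph V) (u v : V) : Set V :=
  {w | ∃ p : G.Walk v w, u ∉ p.support}

/-- One step of the equivalence relation generating regions : both vertices are low degree
(`deg₂ ≤ 3`) and they are within distance 2 of each other. -/
def regStep (G : SimpleGraph V) (a b : V) : Prop :=
  deg2 G a ≤ 3 ∧ deg2 G b ≤ 3 ∧ G.Reachable a b ∧ G.dist a b ≤ 2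

/-- A region : an equivalence class of low-degree vertices under chains of `regStep`,
together with all neighbors of vertices of the class. -/
def IsRegion (G : SimpleGraph V) (R : Set V) : Prop :=
  ∃ x₀, deg2 G x₀ ≤ 3 ∧
    R = {y | Relation.ReflTransGen (regStep G) x₀ y} ∪
        {y | ∃ x, Relation.ReflTransGen (regStep G) x₀ x ∧ G.Adj x y}

theorem aux_dist2 {V : Type*} (G : SimpleGraph V) (hc : G.Connected) (a b : V) :
    G.dist a b = 2 ↔ a ≠ b ∧ ¬ G.Adj a b ∧ ∃ t, G.Adj a t ∧ G.Adj t b := by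
  constructor
  · intro h
    refine ⟨?_, ?_, ?_⟩
    · rintro rfl
      simp at h
    · intro h'
      rw [SimpleGraph.dist_eq_one_iff_adj.mpr h'] at h
      omega
    · obtain ⟨p, hp⟩ := hc.exists_walk_length_eq_dist a b
      rw [h] at hp
      match p, hp with
      | .cons h1 (.cons h2 .nil), _ => exact ⟨_, h1, h2⟩
  · rintro ⟨hne, hna, t, h1, h2⟩
    have hle : G.dist a b ≤ 2 := SimpleGraph.dist_le (.cons h1 (.cons h2 .nil))
    have h0 : G.dist a b ≠ 0 := fun h => hne (hc.dist_eq_zero_iff.mp h)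
    have h1 : G.dist a b ≠ 1 := fun h => hna (SimpleGraph.dist_eq_one_iff_adj.mp h)
    omega

theorem aux_one {V : Type*} [Fintype V] (G : SimpleGraph V) (d : ℕ)
    (hreg : IsRegularGraph G d) (v w y : V) (hwv : w ≠ v) (hnw : ¬ G.Adj v w)
    (hy : G.Adj v y) (hsub : ∀ z, G.Adj y z → z = w ∨ z = v ∨ G.Adj v z) :
    ∃ p, ∀ z, (z = w ∨ z = v ∨ G.Adj v z) → z ≠ y → ¬ G.Adj y z → z = p := by
  have hS : (insert w (insert v (G.neighborSet v))).ncard = d + 2 := by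
    rw [Set.ncard_insert_of_notMem (by simp [hwv, hnw]), Set.ncard_insert_of_notMem (by simp), hreg]
  have hT : (insert y (G.neighborSet y)).ncard = d + 1 := by
    rw [Set.ncard_insert_of_notMem (by simp), hreg]
  have hTS : insert y (G.neighborSet y) ⊆ insert w (insert v (G.neighborSet v)) := by
    intro z hz
    simp only [Set.mem_insert_iff, SimpleGraph.mem_neighborSet] at hz ⊢
    rcases hz with rfl | hz
    · exact Or.inr (Or.inr hy)
    · exact hsub z hz
  have h1 := Set.ncard_sdiff hTS
  rw [hS, hT] at h1
  obtain ⟨p, hp⟩ := Set.ncard_eq_one.mp (h1.trans (by omega : d + 2 - (d + 1) = 1))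
  refine ⟨p, fun z hz hzy hyz => ?_⟩
  have : z ∈ ({p} : Set V) := by
    rw [← hp]
    simp [hz, hzy, hyz]
  simpa using this

/-- Let `d > 6`, `G` connected `d`-regular with `G²` not complete, `R` a
C region of `G` (a region with no vertex of `deg₂ = 1`), and `v ∈ R` with `deg₂(v) = 2`
and `N₂'(v) = {u}`. Then `R` contains at least two vertices adjacent to `u`. -/
theorem stmt11 {V : Type*} [Fintype V] (G : SimpleGraph V) (d : ℕ) (hd : 6 < d)
    (hconn : G.Connected) (hreg : IsRegularGraph G d) (hnotcomplete : graphSquare G ≠ ⊤)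
    (R : Set V) (hR : IsRegion G R) (hC : ∀ x ∈ R, deg2 G x ≠ 1)
    (v u : V) (hvR : v ∈ R) (hv : deg2 G v = 2) (hN : N2' G v = {u}) :
    2 ≤ (R ∩ G.neighborSet u).ncard := by
  obtain ⟨x₀, hx₀, rfl⟩ := hR
  -- the class is closed under steps, and contains v
  have hcl : ∀ a b, Relation.ReflTransGen (regStep G) x₀ a → deg2 G a ≤ 3 → deg2 G b ≤ 3 →
      G.Adj a b → Relation.ReflTransGen (regStep G) x₀ b := by
    intro a b ha h1 h2 hab
    refine ha.tail ⟨h1, h2, hab.reachable, ?_⟩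
    rw [SimpleGraph.dist_eq_one_iff_adj.mpr hab]
    omega
  have hlow : ∀ a, Relation.ReflTransGen (regStep G) x₀ a → deg2 G a ≤ 3 := by
    intro a ha
    rcases Relation.ReflTransGen.cases_tail ha with h | ⟨b, _, h⟩
    · rw [h]; exact hx₀
    · exact h.2.1
  have hvX : Relation.ReflTransGen (regStep G) x₀ v := by
    rcases hvR with h | ⟨x, hx, hxv⟩
    · exact h
    · exact hcl x v hx (hlow x hx) (by omega) hxv
  set R : Set V := {y | Relation.ReflTransGen (regStep G) x₀ y} ∪
        {y | ∃ x, Relation.ReflTransGen (regStep G) x₀ x ∧ G.Adj x y} with hRdef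
  have hNv : ∀ y, G.Adj v y → y ∈ R := fun y hy => Or.inr ⟨v, hvX, hy⟩
  have huN : u ∈ N2' G v := by rw [hN]; rfl
  have hu2 : G.dist v u = 2 := huN.1
  obtain ⟨w, hw2, hwu, hall⟩ : ∃ w, G.dist v w = 2 ∧ w ≠ u ∧
      ∀ z, G.dist v z = 2 → z = u ∨ z = w := by
    obtain ⟨a, b, hab, hs⟩ := Set.ncard_eq_two.mp hv
    have key : ∀ z, G.dist v z = 2 ↔ z = a ∨ z = b := by
      intro z
      have : z ∈ distSet G v 2 ↔ z ∈ ({a, b} : Set V) := by rw [hs]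
      simpa [distSet] using this
    rcases (key u).mp hu2 with rfl | rfl
    · exact ⟨b, (key b).mpr (Or.inr rfl), hab.symm, fun z hz => (key z).mp hz⟩
    · exact ⟨a, (key a).mpr (Or.inl rfl), hab, fun z hz => ((key z).mp hz).symm⟩
  obtain ⟨huv, hnu, x, hvx, hxu⟩ := (aux_dist2 G hconn v u).mp hu2
  obtain ⟨hwv, hnw, -⟩ := (aux_dist2 G hconn v w).mp hw2
  by_contra hcon
  have huniq : ∀ z ∈ R, G.Adj z u → z = x := by
    intro z hz hzu
    by_contra hne
    apply hcon
    rw [← Set.ncard_pair hne]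
    apply Set.ncard_le_ncard _ (Set.toFinite _)
    rintro t (rfl | rfl)
    · exact ⟨hz, hzu.symm⟩
    · exact ⟨hNv _ hvx, hxu.symm⟩
  have hnb : ∀ y z, G.Adj v y → G.Adj y z → z = u ∨ z = w ∨ z = v ∨ G.Adj v z := by
    intro y z hy hz
    by_cases h1 : z = v
    · tauto
    by_cases h2 : G.Adj v z
    · tauto
    have := hall z ((aux_dist2 G hconn v z).mpr ⟨fun h => h1 h.symm, h2, y, hy, hz⟩)
    tauto
  have hnbw : ∀ z, G.Adj w z → z = u ∨ G.Adj v z := by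
    intro z hz
    have hle : G.dist v z ≤ G.dist v w + G.dist w z := hconn.dist_triangle
    rw [hw2, SimpleGraph.dist_eq_one_iff_adj.mpr hz] at hle
    have h0 : G.dist v z ≠ 0 := by
      intro h
      rw [hconn.dist_eq_zero_iff] at h
      subst h
      exact hnw hz.symm
    have h3 : G.dist v z ≠ 3 := by
      intro h
      have : w ∈ N2' G v := ⟨hw2, z, h, hz⟩
      rw [hN] at this
      exact hwu this
    have h12 : G.dist v z = 1 ∨ G.dist v z = 2 := by omega
    rcases h12 with h | h
    · exact Or.inr (SimpleGraph.dist_eq_one_iff_adj.mp h)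
    · rcases hall z h with h | h
      · exact Or.inl h
      · subst h
        exact (G.loopless.irrefl _ hz).elim
  -- neighbors of `y ∈ N(v)`, `y ≠ x`
  have hny : ∀ y z, G.Adj v y → y ≠ x → G.Adj y z → z = w ∨ z = v ∨ G.Adj v z := by
    intro y z hy hyx hz
    rcases hnb y z hy hz with rfl | h
    · exact (hyx (huniq y (hNv y hy) hz)).elim
    · exact h
  have hn2 : ∀ y z t, G.Adj v y → y ≠ x → G.Adj y t → G.Adj t z →
      z = u ∨ z = w ∨ z = v ∨ G.Adj v z := by
    intro y z t hy hyx hyt htz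
    rcases hny y t hy hyx hyt with rfl | rfl | h
    · have := hnbw z htz
      tauto
    · tauto
    · exact hnb t z h htz
  by_cases hwu' : G.Adj w u
  · -- find y adjacent to w in N(v), y ≠ x
    obtain ⟨y, hwy, hy⟩ : ∃ y ∈ G.neighborSet w, y ∉ ({u, x} : Set V) := by
      apply Set.exists_mem_notMem_of_ncard_lt_ncard _ (Set.toFinite _)
      rw [hreg w]
      have := Set.ncard_insert_le u ({x} : Set V)
      rw [Set.ncard_singleton] at this
      omega
    simp only [Set.mem_insert_iff, Set.mem_singleton_iff, not_or] at hy
    have hvy : G.Adj v y := (hnbw y hwy).resolve_left hy.1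
    obtain ⟨p, hp⟩ := aux_one G d hreg v w y hwv.symm hnw hvy (fun z => hny y z hvy hy.2)
    have hdy : deg2 G y ≤ 3 := by
      have hsub : distSet G y 2 ⊆ {u, p} := by
        intro z hz
        obtain ⟨h1, h2, t, h3, h4⟩ := (aux_dist2 G hconn y z).mp hz
        rcases hn2 y z t hvy hy.2 h3 h4 with h | h
        · exact Or.inl h
        · exact Or.inr (hp z h h1.symm h2)
      have h1 := Set.ncard_le_ncard hsub (Set.toFinite _)
      have h2 := Set.ncard_insert_le u ({p} : Set V)
      rw [Set.ncard_singleton] at h2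
      unfold deg2
      omega
    have hyX := hcl v y hvX (by omega) hdy hvy
    have hwR : w ∈ R := Or.inr ⟨y, hyX, G.symm.symm _ _ hwy⟩
    have := huniq w hwR hwu'
    subst this
    exact hnw hvx
  · have hNw : G.neighborSet w = G.neighborSet v := by
      apply Set.eq_of_subset_of_ncard_le _ _ (Set.toFinite _)
      · intro z hz
        rcases hnbw z hz with rfl | h
        · exact (hwu' hz).elim
        · exact h
      · rw [hreg, hreg]
    have hwx : G.Adj w x := by
      have : x ∈ G.neighborSet w := by rw [hNw]; exact hvx
      exact this
    -- find a
    obtain ⟨a, hva, hax, hnax⟩ : ∃ a, G.Adj v a ∧ a ≠ x ∧ ¬ G.Adj x a := by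
      by_contra hno
      have hss : insert u (insert w (insert v (G.neighborSet v \ {x}))) ⊆ G.neighborSet x := by
        rintro z (rfl | rfl | rfl | ⟨h1, h2⟩)
        · exact hxu
        · exact hwx.symm
        · exact hvx.symm
        · by_contra h3
          exact hno ⟨z, h1, h2, h3⟩
      have h1 := Set.ncard_le_ncard hss (Set.toFinite _)
      rw [hreg, Set.ncard_insert_of_notMem (by simp [hwu.symm, huv.symm, hnu]),
        Set.ncard_insert_of_notMem (by simp [hwv.symm, hnw]),
        Set.ncard_insert_of_notMem (by simp),
        Set.ncard_sdiff_singleton_of_mem (by exact hvx), hreg] at h1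
      omega
    obtain ⟨p, hp⟩ := aux_one G d hreg v w a hwv.symm hnw hva (fun z => hny a z hva hax)
    have hxp : x = p := hp x (Or.inr (Or.inr hvx)) hax.symm (fun h => hnax h.symm)
    apply hC a (hNv a hva)
    unfold deg2
    rw [Set.ncard_eq_one]
    refine ⟨x, ?_⟩
    ext z
    constructor
    · intro hz
      obtain ⟨h1, h2, t, h3, h4⟩ := (aux_dist2 G hconn a z).mp hz
      rcases hn2 a z t hva hax h3 h4 with rfl | h
      · exfalso
        rcases hny a t hva hax h3 with rfl | rfl | h
        · exact hwu' h4
        · exact hnu h4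
        · have := huniq t (hNv t h) h4
          subst this
          exact hnax h3.symm
      · rw [hxp]
        exact hp z h h1.symm h2
    · rintro rfl
      exact (aux_dist2 G hconn a z).mpr ⟨hax, fun h => hnax h.symm, v, hva.symm, hvx⟩
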